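/- Let u be a smooth strictly plurisubharmonic function on an open set Ω ⊆ ℂ^n satisfying det(u_{ij̄}) = e^{(n+1)u} on Ω. Set A = (u_{ij̄}), B = (u_{ij}), M = A − B·(Ā)⁻¹·B̄, and for each index i let 𝓑^(i) = ∂_i B − B·(Ā)⁻¹·(∂_i Ā). Then, as an identity of n×n matrix-valued functions on Ω, u^{ij̄} ∂_i∂_{j̄} M − (n+1)M = −u^{ij̄}·𝓑^(i)·(Ā)⁻¹·(𝓑^(j))* (summation over i, j), and in particular the Hermitian matrix u^{ij̄} ∂_i∂_{j̄} M − (n+1)M is non-positive definite at every point of Ω. -/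

import Mathlib

open Complex Matrix
open scoped ComplexOrder

noncomputable section

/-- Wirtinger derivative `∂/∂z_j` of a complex-valued function on `ℂⁿ`. -/
def wdz {n : ℕ} (f : (Fin n → ℂ) → ℂ) (j : Fin n) (z : Fin n → ℂ) : ℂ :=
  (fderiv ℝ f z (Pi.single j 1) - Complex.I * fderiv ℝ f z (Pi.single j Complex.I)) / 2

/-- Wirtinger derivative `∂/∂z̄_j` of a complex-valued function on `ℂⁿ`. -/
def wdzbar {n : ℕ} (f : (Fin n → ℂ) → ℂ) (j : Fin n) (z : Fin n → ℂ) : ℂ :=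
  (fderiv ℝ f z (Pi.single j 1) + Complex.I * fderiv ℝ f z (Pi.single j Complex.I)) / 2

/-- A real-valued function on `ℂⁿ` viewed as complex-valued. -/
def cplx {n : ℕ} (u : (Fin n → ℂ) → ℝ) : (Fin n → ℂ) → ℂ := fun z => (u z : ℂ)

/-- The complex Hessian `A = (u_{ij̄}) = (∂_i ∂_{j̄} u)`. -/
def hessA {n : ℕ} (u : (Fin n → ℂ) → ℝ) (z : Fin n → ℂ) : Matrix (Fin n) (Fin n) ℂ :=
  Matrix.of fun i j => wdz (wdzbar (cplx u) j) i z

/-- The matrix `B = (u_{ij}) = (∂_i ∂_j u)`. -/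
def hessB {n : ℕ} (u : (Fin n → ℂ) → ℝ) (z : Fin n → ℂ) : Matrix (Fin n) (Fin n) ℂ :=
  Matrix.of fun i j => wdz (wdz (cplx u) j) i z

/-- `u^{ij̄}`, the entries of the inverse of the complex Hessian, with the convention
`∑_j u^{ij̄} u_{kj̄} = δ_{ik}`. -/
def uInv {n : ℕ} (u : (Fin n → ℂ) → ℝ) (z : Fin n → ℂ) (i j : Fin n) : ℂ :=
  (hessA u z)⁻¹ j i

/-- Entrywise Wirtinger derivative `∂_i` of a matrix-valued function. -/
def mwdz {n : ℕ} (F : (Fin n → ℂ) → Matrix (Fin n) (Fin n) ℂ) (i : Fin n) (z : Fin n → ℂ) :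
    Matrix (Fin n) (Fin n) ℂ :=
  Matrix.of fun p q => wdz (fun w => F w p q) i z

/-- Entrywise Wirtinger derivative `∂_{j̄}` of a matrix-valued function. -/
def mwdzbar {n : ℕ} (F : (Fin n → ℂ) → Matrix (Fin n) (Fin n) ℂ) (j : Fin n) (z : Fin n → ℂ) :
    Matrix (Fin n) (Fin n) ℂ :=
  Matrix.of fun p q => wdzbar (fun w => F w p q) j z

/-- Entrywise complex conjugate of a matrix. -/
def mconj {n : ℕ} (M : Matrix (Fin n) (Fin n) ℂ) : Matrix (Fin n) (Fin n) ℂ :=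
  M.map (starRingEnd ℂ)

/-- The real coordinate directions `x_1, …, x_n, y_1, …, y_n` of `ℂⁿ`. -/
def realDir {n : ℕ} : (Fin n ⊕ Fin n) → (Fin n → ℂ)
  | Sum.inl j => Pi.single j 1
  | Sum.inr j => Pi.single j Complex.I

/-- The real Hessian of `u : ℂⁿ → ℝ` in the coordinates `(x_1,…,x_n,y_1,…,y_n)`. -/
def realHess {n : ℕ} (u : (Fin n → ℂ) → ℝ) (z : Fin n → ℂ) :
    Matrix (Fin n ⊕ Fin n) (Fin n ⊕ Fin n) ℝ :=
  Matrix.of fun a b => fderiv ℝ (fun w => fderiv ℝ u w (realDir b)) z (realDir a)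


/-- Generic Wirtinger-type derivative; `c = -I` gives `wdz`, `c = I` gives `wdzbar`. -/
def gw {n : ℕ} (c : ℂ) (j : Fin n) (f : (Fin n → ℂ) → ℂ) (z : Fin n → ℂ) : ℂ :=
  (fderiv ℝ f z (Pi.single j 1) + c * fderiv ℝ f z (Pi.single j Complex.I)) / 2

/-- Entrywise version of `gw`. -/
def mD {n : ℕ} (c : ℂ) (j : Fin n) (F : (Fin n → ℂ) → Matrix (Fin n) (Fin n) ℂ)
    (z : Fin n → ℂ) : Matrix (Fin n) (Fin n) ℂ :=
  Matrix.of fun p q => gw c j (fun w => F w p q) z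

/-- Smoothness on a set. -/
def Sm {n : ℕ} (Ω : Set (Fin n → ℂ)) (f : (Fin n → ℂ) → ℂ) : Prop :=
  ContDiffOn ℝ (⊤ : ℕ∞) f Ω

/-- Entrywise smoothness on a set. -/
def MSm {n : ℕ} (Ω : Set (Fin n → ℂ)) (F : (Fin n → ℂ) → Matrix (Fin n) (Fin n) ℂ) : Prop :=
  ∀ p q, Sm Ω (fun w => F w p q)

/-- Generic Hessian. -/
def HH {n : ℕ} (U : (Fin n → ℂ) → ℂ) (a b : ℂ) (z : Fin n → ℂ) : Matrix (Fin n) (Fin n) ℂ :=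
  Matrix.of fun i j => gw a i (gw b j U) z

theorem wdz_eq {n : ℕ} (f : (Fin n → ℂ) → ℂ) (j : Fin n) : wdz f j = gw (-I) j f := by
  funext z; simp only [wdz, gw]; ring

theorem wdzbar_eq {n : ℕ} (f : (Fin n → ℂ) → ℂ) (j : Fin n) : wdzbar f j = gw I j f := by
  funext z; simp only [wdzbar, gw]

theorem mwdz_eq {n : ℕ} (F : (Fin n → ℂ) → Matrix (Fin n) (Fin n) ℂ) (j : Fin n) :
    mwdz F j = mD (-I) j F := by
  funext z; simp only [mwdz, mD, wdz_eq]

theorem mwdzbar_eq {n : ℕ} (F : (Fin n → ℂ) → Matrix (Fin n) (Fin n) ℂ) (j : Fin n) :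
    mwdzbar F j = mD I j F := by
  funext z; simp only [mwdzbar, mD, wdzbar_eq]

theorem hessA_eq {n : ℕ} (u : (Fin n → ℂ) → ℝ) : hessA u = HH (cplx u) (-I) I := by
  funext z; simp only [hessA, HH, wdz_eq, wdzbar_eq]

theorem hessB_eq {n : ℕ} (u : (Fin n → ℂ) → ℝ) : hessB u = HH (cplx u) (-I) (-I) := by
  funext z; simp only [hessB, HH, wdz_eq]

section wcalc
variable {n : ℕ} {Ω : Set (Fin n → ℂ)}

theorem Sm.diffAt {f : (Fin n → ℂ) → ℂ} (hΩ : IsOpen Ω) (hf : Sm Ω f) {z} (hz : z ∈ Ω) :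
    DifferentiableAt ℝ f z :=
  (ContDiffOn.contDiffAt hf (hΩ.mem_nhds hz)).differentiableAt (by simp)

theorem Sm.gw (hΩ : IsOpen Ω) {f : (Fin n → ℂ) → ℂ} (hf : Sm Ω f) (c : ℂ) (j : Fin n) :
    Sm Ω (gw c j f) := by
  have h : ContDiffOn ℝ (⊤ : ℕ∞) (fderiv ℝ f) Ω := ContDiffOn.fderiv_of_isOpen hf hΩ (by simp)
  unfold Sm _root_.gw
  have h1 : ∀ v, ContDiffOn ℝ (⊤ : ℕ∞) (fun z => fderiv ℝ f z v) Ω :=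
    fun v => h.clm_apply contDiffOn_const
  exact ((h1 _).add (contDiffOn_const.mul (h1 _))).div_const _

theorem gw_congr (hΩ : IsOpen Ω) {f g : (Fin n → ℂ) → ℂ} (h : ∀ z ∈ Ω, f z = g z) (c : ℂ)
    (j : Fin n) {z} (hz : z ∈ Ω) : gw c j f z = gw c j g z := by
  have : f =ᶠ[nhds z] g := Filter.eventually_of_mem (hΩ.mem_nhds hz) h
  simp only [gw, this.fderiv_eq]

theorem gw_comm (hΩ : IsOpen Ω) {f : (Fin n → ℂ) → ℂ} (hf : Sm Ω f) (c d : ℂ)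
    (j k : Fin n) {z} (hz : z ∈ Ω) : gw c j (gw d k f) z = gw d k (gw c j f) z := by
  have h : ContDiffOn ℝ (⊤ : ℕ∞) (fderiv ℝ f) Ω := ContDiffOn.fderiv_of_isOpen hf hΩ (by simp)
  have hd : DifferentiableAt ℝ (fderiv ℝ f) z :=
    (h.contDiffAt (hΩ.mem_nhds hz)).differentiableAt (by simp)
  have hs : IsSymmSndFDerivAt ℝ f z :=
    (ContDiffOn.contDiffAt hf (hΩ.mem_nhds hz)).isSymmSndFDerivAt (by simp only [minSmoothness_of_isRCLikeNormedField]; exact WithTop.coe_le_coe.2 (le_top : (2 : ℕ∞) ≤ ⊤))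
  have key : ∀ (d : ℂ) (k : Fin n) (e), fderiv ℝ (gw d k f) z e =
      (fderiv ℝ (fderiv ℝ f) z e (Pi.single k 1) +
        d * fderiv ℝ (fderiv ℝ f) z e (Pi.single k Complex.I)) / 2 := by
    intro d k e
    have h1 : ∀ v, HasFDerivAt (fun w => fderiv ℝ f w v) ((fderiv ℝ (fderiv ℝ f) z).flip v) z := by
      intro v
      simpa using hd.hasFDerivAt.clm_apply (hasFDerivAt_const v z)
    have h2 := ((h1 (Pi.single k 1)).add ((h1 (Pi.single k Complex.I)).const_mul d)).mul_const
      (2⁻¹ : ℂ)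
    have h3 : gw d k f = fun w => ((fun w => fderiv ℝ f w (Pi.single k 1)) + 
       fun w => d * fderiv ℝ f w (Pi.single k Complex.I)) w * 2⁻¹ := by
      funext w; simp [gw, div_eq_mul_inv]
    rw [h3, h2.fderiv]
    simp; ring
  have e1 := hs.eq
  rw [gw, gw, key, key, key, key]
  rw [hs.eq (Pi.single j 1) (Pi.single k 1), hs.eq (Pi.single j 1) (Pi.single k I),
    hs.eq (Pi.single j I) (Pi.single k 1), hs.eq (Pi.single j I) (Pi.single k I)]
  ring

theorem gw_add (hΩ : IsOpen Ω) {f g : (Fin n → ℂ) → ℂ} (hf : Sm Ω f) (hg : Sm Ω g) (c : ℂ)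
    (j : Fin n) {z} (hz : z ∈ Ω) : gw c j (fun w => f w + g w) z = gw c j f z + gw c j g z := by
  simp only [gw]
  rw [fderiv_fun_add (hf.diffAt hΩ hz) (hg.diffAt hΩ hz)]
  simp; ring

theorem gw_sub (hΩ : IsOpen Ω) {f g : (Fin n → ℂ) → ℂ} (hf : Sm Ω f) (hg : Sm Ω g) (c : ℂ)
    (j : Fin n) {z} (hz : z ∈ Ω) : gw c j (fun w => f w - g w) z = gw c j f z - gw c j g z := by
  simp only [gw]
  rw [fderiv_fun_sub (hf.diffAt hΩ hz) (hg.diffAt hΩ hz)]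
  simp; ring

theorem gw_mul (hΩ : IsOpen Ω) {f g : (Fin n → ℂ) → ℂ} (hf : Sm Ω f) (hg : Sm Ω g) (c : ℂ)
    (j : Fin n) {z} (hz : z ∈ Ω) :
    gw c j (fun w => f w * g w) z = gw c j f z * g z + f z * gw c j g z := by
  simp only [gw]
  rw [fderiv_fun_mul (hf.diffAt hΩ hz) (hg.diffAt hΩ hz)]
  simp; ring

theorem gw_sum (hΩ : IsOpen Ω) {ι : Type*} (s : Finset ι) {f : ι → (Fin n → ℂ) → ℂ}
    (hf : ∀ i, Sm Ω (f i)) (c : ℂ)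
    (j : Fin n) {z} (hz : z ∈ Ω) :
    gw c j (fun w => ∑ i ∈ s, f i w) z = ∑ i ∈ s, gw c j (f i) z := by
  simp only [gw]
  rw [fderiv_fun_sum (fun i _ => (hf i).diffAt hΩ hz)]
  simp [Finset.mul_sum, ← Finset.sum_add_distrib, Finset.sum_div]

theorem gw_const (a : ℂ) (c : ℂ) (j : Fin n) (z) : gw c j (fun _ => a) z = 0 := by
  simp [gw]

theorem gw_const_mul (hΩ : IsOpen Ω) {f : (Fin n → ℂ) → ℂ} (hf : Sm Ω f) (a c : ℂ)
    (j : Fin n) {z} (hz : z ∈ Ω) :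
    gw c j (fun w => a * f w) z = a * gw c j f z := by
  have h : Sm Ω (fun _ : Fin n → ℂ => a) := contDiffOn_const
  rw [gw_mul hΩ h hf c j hz, gw_const]; simp

theorem gw_conj (hΩ : IsOpen Ω) {f : (Fin n → ℂ) → ℂ} (hf : Sm Ω f) (c : ℂ)
    (j : Fin n) {z} (hz : z ∈ Ω) :
    (starRingEnd ℂ) (gw c j f z) = gw (starRingEnd ℂ c) j (fun w => starRingEnd ℂ (f w)) z := by
  have h : HasFDerivAt (fun w => starRingEnd ℂ (f w))
      ((Complex.conjCLE : ℂ →L[ℝ] ℂ).comp (fderiv ℝ f z)) z :=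
    (Complex.conjCLE : ℂ →L[ℝ] ℂ).hasFDerivAt.comp z (hf.diffAt hΩ hz).hasFDerivAt
  simp only [gw]
  rw [h.fderiv]
  simp [map_ofNat]

theorem MSm.mul {F G : (Fin n → ℂ) → Matrix (Fin n) (Fin n) ℂ} (hF : MSm Ω F) (hG : MSm Ω G) :
    MSm Ω (fun w => F w * G w) := by
  intro p q
  simp only [Matrix.mul_apply]
  exact ContDiffOn.sum fun k _ => ContDiffOn.mul (hF p k) (hG k q)

theorem MSm.sub {F G : (Fin n → ℂ) → Matrix (Fin n) (Fin n) ℂ} (hF : MSm Ω F) (hG : MSm Ω G) :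
    MSm Ω (fun w => F w - G w) := fun p q => ContDiffOn.sub (hF p q) (hG p q)

theorem MSm.add {F G : (Fin n → ℂ) → Matrix (Fin n) (Fin n) ℂ} (hF : MSm Ω F) (hG : MSm Ω G) :
    MSm Ω (fun w => F w + G w) := fun p q => ContDiffOn.add (hF p q) (hG p q)

theorem MSm.mD {F : (Fin n → ℂ) → Matrix (Fin n) (Fin n) ℂ} (hΩ : IsOpen Ω) (hF : MSm Ω F)
    (c : ℂ) (j : Fin n) : MSm Ω (mD c j F) := fun p q => (hF p q).gw hΩ c j

theorem Sm.det {F : (Fin n → ℂ) → Matrix (Fin n) (Fin n) ℂ} (hF : MSm Ω F) :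
    Sm Ω (fun w => (F w).det) := by
  simp only [Matrix.det_apply']
  refine ContDiffOn.sum fun σ _ => ContDiffOn.mul contDiffOn_const ?_
  exact contDiffOn_prod fun i _ => hF _ _

theorem MSm.inv {F : (Fin n → ℂ) → Matrix (Fin n) (Fin n) ℂ} (hF : MSm Ω F)
    (h0 : ∀ z ∈ Ω, (F z).det ≠ 0) : MSm Ω (fun w => (F w)⁻¹) := by
  intro p q
  simp only [Matrix.inv_def, Ring.inverse_eq_inv', Matrix.smul_apply, smul_eq_mul,
    Matrix.adjugate_apply]
  refine ContDiffOn.mul (ContDiffOn.inv (Sm.det hF) h0) ?_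
  refine Sm.det ?_
  intro i j
  by_cases h : i = q
  · subst h; simp only [Matrix.updateRow_self]; exact contDiffOn_const
  · simp only [Matrix.updateRow_ne h]; exact hF _ _

theorem mD_congr (hΩ : IsOpen Ω) {F G : (Fin n → ℂ) → Matrix (Fin n) (Fin n) ℂ}
    (h : ∀ z ∈ Ω, F z = G z) (c : ℂ) (j : Fin n) {z} (hz : z ∈ Ω) : mD c j F z = mD c j G z := by
  ext p q
  exact gw_congr hΩ (fun w hw => by rw [h w hw]) c j hz

theorem mD_add (hΩ : IsOpen Ω) {F G : (Fin n → ℂ) → Matrix (Fin n) (Fin n) ℂ}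
    (hF : MSm Ω F) (hG : MSm Ω G) (c : ℂ) (j : Fin n) {z} (hz : z ∈ Ω) :
    mD c j (fun w => F w + G w) z = mD c j F z + mD c j G z := by
  ext p q
  exact gw_add hΩ (hF p q) (hG p q) c j hz

theorem mD_sub (hΩ : IsOpen Ω) {F G : (Fin n → ℂ) → Matrix (Fin n) (Fin n) ℂ}
    (hF : MSm Ω F) (hG : MSm Ω G) (c : ℂ) (j : Fin n) {z} (hz : z ∈ Ω) :
    mD c j (fun w => F w - G w) z = mD c j F z - mD c j G z := by
  ext p q
  exact gw_sub hΩ (hF p q) (hG p q) c j hz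

theorem mD_mul (hΩ : IsOpen Ω) {F G : (Fin n → ℂ) → Matrix (Fin n) (Fin n) ℂ}
    (hF : MSm Ω F) (hG : MSm Ω G) (c : ℂ) (j : Fin n) {z} (hz : z ∈ Ω) :
    mD c j (fun w => F w * G w) z = mD c j F z * G z + F z * mD c j G z := by
  ext p q
  simp only [mD, Matrix.mul_apply, Matrix.of_apply, Matrix.add_apply]
  rw [gw_sum hΩ _ (fun i => ContDiffOn.mul (hF p i) (hG i q)) c j hz, ← Finset.sum_add_distrib]
  exact Finset.sum_congr rfl fun i _ => gw_mul hΩ (hF p i) (hG i q) c j hz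

theorem mD_inv (hΩ : IsOpen Ω) {F : (Fin n → ℂ) → Matrix (Fin n) (Fin n) ℂ}
    (hF : MSm Ω F) (h0 : ∀ z ∈ Ω, (F z).det ≠ 0) (c : ℂ) (j : Fin n) {z} (hz : z ∈ Ω) :
    mD c j (fun w => (F w)⁻¹) z = -((F z)⁻¹ * mD c j F z * (F z)⁻¹) := by
  have h1 := mD_mul hΩ hF (hF.inv h0) c j hz
  have h2 : mD c j (fun w => F w * (F w)⁻¹) z = 0 := by
    rw [mD_congr hΩ (G := fun _ => 1)
      (fun w hw => Matrix.mul_nonsing_inv _ (isUnit_iff_ne_zero.2 (h0 w hw))) c j hz]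
    ext p q; exact gw_const _ _ _ _
  rw [h2] at h1
  have hu : IsUnit (F z).det := isUnit_iff_ne_zero.2 (h0 z hz)
  have h3 := congrArg (fun X => (F z)⁻¹ * X) h1
  simp only [mul_add, mul_zero] at h3
  rw [← mul_assoc, Matrix.nonsing_inv_mul_cancel_left _ _ hu] at h3
  exact (neg_eq_of_add_eq_zero_right h3.symm).symm

theorem gw_trace (hΩ : IsOpen Ω) {F : (Fin n → ℂ) → Matrix (Fin n) (Fin n) ℂ}
    (hF : MSm Ω F) (c : ℂ) (j : Fin n) {z} (hz : z ∈ Ω) :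
    gw c j (fun w => (F w).trace) z = (mD c j F z).trace := by
  simp only [Matrix.trace, Matrix.diag]
  exact gw_sum hΩ _ (fun i => hF i i) c j hz

theorem fderiv_det {F : (Fin n → ℂ) → Matrix (Fin n) (Fin n) ℂ} {z}
    (hF : ∀ p q, DifferentiableAt ℝ (fun w => F w p q) z) (v : Fin n → ℂ) :
    fderiv ℝ (fun w => (F w).det) z v =
      ∑ i, ∑ k, (F z).adjugate k i * fderiv ℝ (fun w => F w i k) z v := by
  have h1 : HasFDerivAt (fun w => (F w).det) (∑ σ : Equiv.Perm (Fin n), ((Equiv.Perm.sign σ : ℤ) : ℂ) •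
      ∑ i, (∏ l ∈ Finset.univ.erase i, F z (σ l) l) • fderiv ℝ (fun w => F w (σ i) i) z) z := by
    simp only [Matrix.det_apply']
    refine HasFDerivAt.fun_sum fun σ _ => HasFDerivAt.const_mul ?_ _
    exact HasFDerivAt.finsetProd fun i _ => (hF _ _).hasFDerivAt
  rw [h1.fderiv]
  have h2 : ∀ i, ∑ k, (F z).adjugate i k * fderiv ℝ (fun w => F w k i) z v =
      ((F z).updateCol i (fun k => fderiv ℝ (fun w => F w k i) z v)).det := by
    intro i
    rw [← Matrix.cramer_apply, Matrix.cramer_eq_adjugate_mulVec]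
    rfl
  rw [Finset.sum_comm]
  simp only [h2, Matrix.det_apply']
  rw [Finset.sum_comm]
  simp only [_root_.sum_apply, _root_.smul_apply, smul_eq_mul]
  refine Finset.sum_congr rfl fun σ _ => ?_
  rw [Finset.mul_sum]
  refine Finset.sum_congr rfl fun i _ => ?_
  congr 1
  rw [← Finset.mul_prod_erase _ _ (Finset.mem_univ i), mul_comm]
  simp only [Matrix.updateCol_self]
  congr 1
  refine Finset.prod_congr rfl fun l hl => ?_
  rw [Matrix.updateCol_ne (Finset.ne_of_mem_erase hl)]

theorem gw_det (hΩ : IsOpen Ω) {F : (Fin n → ℂ) → Matrix (Fin n) (Fin n) ℂ}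
    (hF : MSm Ω F) (c : ℂ) (j : Fin n) {z} (hz : z ∈ Ω) (h0 : (F z).det ≠ 0) :
    gw c j (fun w => (F w).det) z = (F z).det * ((F z)⁻¹ * mD c j F z).trace := by
  have hd : (F z).det • (F z)⁻¹ = (F z).adjugate := by
    rw [Matrix.inv_def, smul_smul, Ring.inverse_eq_inv', mul_inv_cancel₀ h0, one_smul]
  rw [← smul_eq_mul, ← Matrix.trace_smul, ← Matrix.smul_mul, hd]
  simp only [gw, fderiv_det (fun p q => (hF p q).diffAt hΩ hz), Matrix.trace, Matrix.diag,
    Matrix.mul_apply, mD, Matrix.of_apply]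
  rw [Finset.mul_sum, ← Finset.sum_add_distrib, Finset.sum_div, Finset.sum_comm' (t' := Finset.univ) (s' := fun _ => Finset.univ) (by simp)]
  refine Finset.sum_congr rfl fun i _ => ?_
  rw [Finset.mul_sum, ← Finset.sum_add_distrib, Finset.sum_div]
  refine Finset.sum_congr rfl fun k _ => ?_
  ring

end wcalc

section key
variable {n : ℕ} {Ω : Set (Fin n → ℂ)}

theorem MSm.HH (hΩ : IsOpen Ω) {U : (Fin n → ℂ) → ℂ} (hU : Sm Ω U) (a b : ℂ) :
    MSm Ω (HH U a b) := fun p q => (hU.gw hΩ b q).gw hΩ a p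

/-- The trace term. -/
def TT (U : (Fin n → ℂ) → ℂ) (a b : ℂ) (z : Fin n → ℂ) : Matrix (Fin n) (Fin n) ℂ :=
  Matrix.of fun p q => ((HH U (-I) I z)⁻¹ * mD a p (HH U (-I) I) z * (HH U (-I) I z)⁻¹ *
    mD b q (HH U (-I) I) z).trace

theorem first_log_deriv (hΩ : IsOpen Ω) {U : (Fin n → ℂ) → ℂ} (hU : Sm Ω U)
    (h0 : ∀ z ∈ Ω, (HH U (-I) I z).det ≠ 0)
    (hKE : ∀ z ∈ Ω, (HH U (-I) I z).det = Complex.exp (((n : ℂ) + 1) * U z))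
    (c : ℂ) (j : Fin n) {z} (hz : z ∈ Ω) :
    ((HH U (-I) I z)⁻¹ * mD c j (HH U (-I) I) z).trace = ((n : ℂ) + 1) * gw c j U z := by
  have h1 := gw_det hΩ (MSm.HH hΩ hU (-I) I) c j hz (h0 z hz)
  rw [gw_congr hΩ hKE c j hz] at h1
  have h2 : gw c j (fun w => Complex.exp (((n : ℂ) + 1) * U w)) z =
      Complex.exp (((n : ℂ) + 1) * U z) * (((n : ℂ) + 1) * gw c j U z) := by
    have hd := ((hU.diffAt hΩ hz).hasFDerivAt.const_mul ((n : ℂ) + 1)).cexp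
    simp only [gw]
    rw [hd.fderiv]
    simp; ring
  rw [h2, ← hKE z hz] at h1
  exact (mul_left_cancel₀ (h0 z hz) h1).symm

theorem L_HH (hΩ : IsOpen Ω) {U : (Fin n → ℂ) → ℂ} (hU : Sm Ω U)
    (h0 : ∀ z ∈ Ω, (HH U (-I) I z).det ≠ 0)
    (hKE : ∀ z ∈ Ω, (HH U (-I) I z).det = Complex.exp (((n : ℂ) + 1) * U z))
    (a b : ℂ) {z} (hz : z ∈ Ω) :
    ∑ i, ∑ j, (HH U (-I) I z)⁻¹ j i • mD (-I) i (mD I j (HH U a b)) z =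
      ((n : ℂ) + 1) • HH U a b z + TT U a b z := by
  have hA := MSm.HH hΩ hU (-I) I
  ext p q
  have h1 := gw_congr hΩ (fun w hw => first_log_deriv hΩ hU h0 hKE b q hw) a p hz
  rw [gw_trace hΩ ((hA.inv h0).mul (hA.mD hΩ b q)) a p hz,
    mD_mul hΩ (hA.inv h0) (hA.mD hΩ b q) a p hz, mD_inv hΩ hA h0 a p hz,
    gw_const_mul hΩ (hU.gw hΩ b q) _ a p hz] at h1
  have h2 : (∑ i, ∑ j, (HH U (-I) I z)⁻¹ j i • mD (-I) i (mD I j (HH U a b)) z) p q =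
      ((HH U (-I) I z)⁻¹ * mD a p (mD b q (HH U (-I) I)) z).trace := by
    simp only [Matrix.sum_apply, Matrix.smul_apply, smul_eq_mul, Matrix.trace, Matrix.diag,
      Matrix.mul_apply]
    rw [Finset.sum_comm]
    refine Finset.sum_congr rfl fun j _ => Finset.sum_congr rfl fun i _ => ?_
    congr 1
    change gw (-I) i (gw I j (gw a p (gw b q U))) z = gw a p (gw b q (gw (-I) i (gw I j U))) z
    have e1 : ∀ w ∈ Ω, gw I j (gw a p (gw b q U)) w = gw a p (gw b q (gw I j U)) w := by
      intro w hw
      rw [gw_comm hΩ (hU.gw hΩ b q) _ _ _ _ hw]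
      exact gw_congr hΩ (fun x hx => gw_comm hΩ hU _ _ _ _ hx) _ _ hw
    rw [gw_congr hΩ e1 _ _ hz, gw_comm hΩ ((hU.gw hΩ I j).gw hΩ b q) _ _ _ _ hz]
    exact gw_congr hΩ (fun x hx => gw_comm hΩ (hU.gw hΩ I j) _ _ _ _ hx) _ _ hz
  rw [h2, Matrix.add_apply, Matrix.smul_apply, smul_eq_mul]
  change _ = ((n : ℂ) + 1) * gw a p (gw b q U) z + TT U a b z p q
  rw [← h1, TT, Matrix.of_apply, Matrix.neg_mul, Matrix.trace_add, Matrix.trace_neg]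
  ring

theorem C_TT (hΩ : IsOpen Ω) {U : (Fin n → ℂ) → ℂ} (hU : Sm Ω U)
    (a b : ℂ) {z} (hz : z ∈ Ω) :
    ∑ i, ∑ j, (HH U (-I) I z)⁻¹ j i • (mD I j (HH U a (-I)) z * (HH U I (-I) z)⁻¹ *
      mD (-I) i (HH U I b) z) = TT U a b z := by
  have hY : HH U I (-I) z = (HH U (-I) I z)ᵀ := by
    ext i j; exact gw_comm hΩ hU _ _ _ _ hz
  rw [hY, ← Matrix.transpose_nonsing_inv]
  set V := (HH U (-I) I z)⁻¹ with hV
  ext p q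
  have e1 : ∀ j s, mD I j (HH U a (-I)) z p s = mD a p (HH U (-I) I) z s j := by
    intro j s
    change gw I j (gw a p (gw (-I) s U)) z = gw a p (gw (-I) s (gw I j U)) z
    rw [gw_comm hΩ (hU.gw hΩ _ _) _ _ _ _ hz]
    exact gw_congr hΩ (fun x hx => gw_comm hΩ hU _ _ _ _ hx) _ _ hz
  have e2 : ∀ i t, mD (-I) i (HH U I b) z t q = mD b q (HH U (-I) I) z i t := by
    intro i t
    change gw (-I) i (gw I t (gw b q U)) z = gw b q (gw (-I) i (gw I t U)) z
    rw [gw_comm hΩ (hU.gw hΩ I t) b (-I) q i hz]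
    exact gw_congr hΩ (fun x hx => gw_comm hΩ hU _ _ _ _ hx) _ _ hz
  have e4 : TT U a b z p q = ((V * (mD a p (HH U (-I) I) z)) * (V * 
      (mD b q (HH U (-I) I) z))).trace := by
    rw [TT, Matrix.of_apply, ← hV]; simp only [Matrix.mul_assoc]
  rw [e4]
  simp only [Matrix.sum_apply, Matrix.smul_apply, smul_eq_mul, Matrix.trace, Matrix.diag,
      Matrix.mul_apply, e1, e2, Matrix.transpose_apply]
  rw [Finset.sum_comm]
  conv_rhs => rw [Finset.sum_comm]
  refine Finset.sum_congr rfl fun j _ => ?_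
  simp only [Finset.mul_sum]
  conv_rhs => rw [Finset.sum_comm]
  refine Finset.sum_congr rfl fun i _ => Finset.sum_congr rfl fun t _ => ?_
  rw [mul_left_comm]
  congr 1
  exact Finset.sum_congr rfl fun s _ => mul_comm _ _

theorem HH_conj (hΩ : IsOpen Ω) {U : (Fin n → ℂ) → ℂ} (hU : Sm Ω U)
    (hr : ∀ w, starRingEnd ℂ (U w) = U w) (a b : ℂ) (p q : Fin n) {z} (hz : z ∈ Ω) :
    starRingEnd ℂ (HH U a b z p q) = HH U (starRingEnd ℂ a) (starRingEnd ℂ b) z p q := by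
  change starRingEnd ℂ (gw a p (gw b q U) z) = gw _ p (gw _ q U) z
  rw [gw_conj hΩ (hU.gw hΩ b q) a p hz]
  refine gw_congr hΩ (fun w hw => ?_) _ _ hz
  rw [gw_conj hΩ hU b q hw]
  simp only [hr]

theorem HH_star (hΩ : IsOpen Ω) {U : (Fin n → ℂ) → ℂ} (hU : Sm Ω U)
    (hr : ∀ w, starRingEnd ℂ (U w) = U w) (a b : ℂ) {z} (hz : z ∈ Ω) :
    (HH U a b z)ᴴ = HH U (starRingEnd ℂ b) (starRingEnd ℂ a) z := by
  ext p q
  rw [Matrix.conjTranspose_apply]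
  refine (HH_conj hΩ hU hr a b q p hz).trans ?_
  exact gw_comm hΩ hU _ _ _ _ hz

theorem mD_HH_star (hΩ : IsOpen Ω) {U : (Fin n → ℂ) → ℂ} (hU : Sm Ω U)
    (hr : ∀ w, starRingEnd ℂ (U w) = U w) (a b c : ℂ) (j : Fin n) {z} (hz : z ∈ Ω) :
    (mD c j (HH U a b) z)ᴴ =
      mD (starRingEnd ℂ c) j (HH U (starRingEnd ℂ b) (starRingEnd ℂ a)) z := by
  ext p q
  rw [Matrix.conjTranspose_apply]
  refine (gw_conj hΩ (MSm.HH hΩ hU a b q p) c j hz).trans ?_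
  refine gw_congr hΩ (fun w hw => ?_) _ _ hz
  rw [← HH_star hΩ hU hr a b hw]; rfl

/-- Second derivative of `X Y⁻¹ Z`. -/
theorem second_deriv (hΩ : IsOpen Ω) {X Y Z : (Fin n → ℂ) → Matrix (Fin n) (Fin n) ℂ}
    (hX : MSm Ω X) (hY : MSm Ω Y) (hZ : MSm Ω Z) (h0 : ∀ z ∈ Ω, (Y z).det ≠ 0)
    (c d : ℂ) (i j : Fin n) {z} (hz : z ∈ Ω) :
    mD c i (mD d j (fun w => X w * (Y w)⁻¹ * Z w)) z =
      (mD c i X z - X z * (Y z)⁻¹ * mD c i Y z) * (Y z)⁻¹ *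
        (mD d j Z z - mD d j Y z * (Y z)⁻¹ * Z z)
      + (mD d j X z * (Y z)⁻¹ * mD c i Z z
        - mD d j X z * (Y z)⁻¹ * mD c i Y z * ((Y z)⁻¹ * Z z)
        - X z * (Y z)⁻¹ * (mD d j Y z * (Y z)⁻¹ * mD c i Z z)
        + X z * (Y z)⁻¹ * (mD d j Y z * (Y z)⁻¹ * mD c i Y z) * ((Y z)⁻¹ * Z z))
      + (mD c i (mD d j X) z * ((Y z)⁻¹ * Z z)
        - X z * (Y z)⁻¹ * mD c i (mD d j Y) z * ((Y z)⁻¹ * Z z)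
        + X z * (Y z)⁻¹ * mD c i (mD d j Z) z) := by
  have hV := hY.inv h0
  have e1 : ∀ w ∈ Ω, mD d j (fun w => X w * (Y w)⁻¹ * Z w) w =
      (mD d j X w * (Y w)⁻¹ - X w * ((Y w)⁻¹ * mD d j Y w * (Y w)⁻¹)) * Z w
        + X w * (Y w)⁻¹ * mD d j Z w := by
    intro w hw
    rw [mD_mul hΩ (hX.mul hV) hZ d j hw, mD_mul hΩ hX hV d j hw, mD_inv hΩ hY h0 d j hw,
      mul_neg, ← sub_eq_add_neg]
  have hXj := hX.mD hΩ d j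
  have hYj := hY.mD hΩ d j
  have hZj := hZ.mD hΩ d j
  have hVYV := (hV.mul hYj).mul hV
  rw [mD_congr hΩ e1 c i hz,
    mD_add hΩ (((hXj.mul hV).sub (hX.mul hVYV)).mul hZ) ((hX.mul hV).mul hZj) c i hz,
    mD_mul hΩ ((hXj.mul hV).sub (hX.mul hVYV)) hZ c i hz,
    mD_sub hΩ (hXj.mul hV) (hX.mul hVYV) c i hz,
    mD_mul hΩ hXj hV c i hz, mD_mul hΩ hX hVYV c i hz, mD_mul hΩ (hV.mul hYj) hV c i hz,
    mD_mul hΩ hV hYj c i hz, mD_mul hΩ (hX.mul hV) hZj c i hz, mD_mul hΩ hX hV c i hz,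
    mD_inv hΩ hY h0 c i hz]
  noncomm_ring

theorem psd_sum {G W : Matrix (Fin n) (Fin n) ℂ} (hG : G.PosSemidef) (hW : W.PosSemidef)
    (K : Fin n → Matrix (Fin n) (Fin n) ℂ) :
    (∑ i, ∑ j, G j i • (K i * W * (K j)ᴴ)).PosSemidef := by
  obtain ⟨m, v, rfl⟩ := Matrix.posSemidef_iff_eq_sum_vecMulVec.1 hG
  have : ∑ i, ∑ j, (∑ k, vecMulVec (v k) (star (v k))) j i • (K i * W * (K j)ᴴ) =
      ∑ k, (∑ i, star (v k i) • K i) * W * (∑ j, star (v k j) • K j)ᴴ := by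
    simp only [Matrix.conjTranspose_sum, Matrix.conjTranspose_smul, star_star, Finset.sum_mul,
      Finset.mul_sum, Matrix.sum_apply, vecMulVec_apply, Finset.sum_smul, smul_mul_assoc,
      mul_smul_comm, Finset.smul_sum, smul_smul, Pi.star_apply]
    rw [Finset.sum_comm' (t' := Finset.univ) (s' := fun _ => Finset.univ) (by simp)]
    conv_rhs => rw [Finset.sum_comm]
    refine Finset.sum_congr rfl fun j _ => ?_
    conv_rhs => rw [Finset.sum_comm]
  rw [this]
  exact Matrix.posSemidef_sum _ fun k _ => hW.mul_mul_conjTranspose_same _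

end key

/-- Weighted double sums distribute over the shape of the second derivative. -/
theorem sum_shape {n : ℕ} (g : Fin n → Fin n → ℂ)
    (P Q1 Q2 Q3 Q4 R0 R1 R2 R3 : Fin n → Fin n → Matrix (Fin n) (Fin n) ℂ)
    (E F : Matrix (Fin n) (Fin n) ℂ) :
    ∑ i, ∑ j, g i j • (R0 i j - (P i j + (Q1 i j - Q2 i j * F - E * Q3 i j + E * Q4 i j * F)
      + (R1 i j * F - E * R2 i j * F + E * R3 i j))) =
    (∑ i, ∑ j, g i j • R0 i j) - ((∑ i, ∑ j, g i j • P i j) +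
      ((∑ i, ∑ j, g i j • Q1 i j) - (∑ i, ∑ j, g i j • Q2 i j) * F
        - E * (∑ i, ∑ j, g i j • Q3 i j) + E * (∑ i, ∑ j, g i j • Q4 i j) * F)
      + ((∑ i, ∑ j, g i j • R1 i j) * F - E * (∑ i, ∑ j, g i j • R2 i j) * F
        + E * (∑ i, ∑ j, g i j • R3 i j))) := by
  simp only [smul_sub, smul_add, Finset.sum_sub_distrib, Finset.sum_add_distrib, Finset.sum_mul,
    Finset.mul_sum, smul_mul_assoc, mul_smul_comm]

theorem laplacian_M_identity_and_nonpositive (n : ℕ) (Ω : Set (Fin n → ℂ)) (hΩ : IsOpen Ω)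
    (u : (Fin n → ℂ) → ℝ) (hu : ContDiffOn ℝ (⊤ : ℕ∞) u Ω)
    (hpsh : ∀ z ∈ Ω, (hessA u z).PosDef)
    (hKE : ∀ z ∈ Ω, (hessA u z).det = (Real.exp ((n + 1) * u z) : ℂ)) :
    ∀ z ∈ Ω,
      (∑ i, ∑ j, uInv u z i j •
          mwdz (mwdzbar
            (fun w => hessA u w - hessB u w * (mconj (hessA u w))⁻¹ * mconj (hessB u w)) j) i z)
        - ((n : ℂ) + 1) •
            (hessA u z - hessB u z * (mconj (hessA u z))⁻¹ * mconj (hessB u z))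
      = -∑ i, ∑ j, uInv u z i j •
          ((mwdz (hessB u) i z -
              hessB u z * (mconj (hessA u z))⁻¹ * mwdz (fun w => mconj (hessA u w)) i z) *
            (mconj (hessA u z))⁻¹ *
            (mwdz (hessB u) j z -
              hessB u z * (mconj (hessA u z))⁻¹ * mwdz (fun w => mconj (hessA u w)) j z)ᴴ)
    ∧ (-((∑ i, ∑ j, uInv u z i j •
          mwdz (mwdzbar
            (fun w => hessA u w - hessB u w * (mconj (hessA u w))⁻¹ * mconj (hessB u w)) j) i z)
        - ((n : ℂ) + 1) •
            (hessA u z - hessB u z * (mconj (hessA u z))⁻¹ * mconj (hessB u z)))).PosSemidef := by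

  intro z hz
  have hU : Sm Ω (cplx u) := Complex.ofRealCLM.contDiff.comp_contDiffOn hu
  have hr : ∀ w, starRingEnd ℂ (cplx u w) = cplx u w := fun w => Complex.conj_ofReal _
  rw [hessB_eq, hessA_eq] at *
  generalize hUU : cplx u = U at *
  have h0 : ∀ w ∈ Ω, (HH U (-I) I w).det ≠ 0 := fun w hw => (hpsh w hw).det_pos.ne'
  have hKE' : ∀ w ∈ Ω, (HH U (-I) I w).det = Complex.exp (((n : ℂ) + 1) * U w) := by
    intro w hw
    rw [hKE w hw, ← hUU]
    simp [cplx]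
  have hcA : ∀ w ∈ Ω, mconj (HH U (-I) I w) = HH U I (-I) w := by
    intro w hw; ext p q
    simpa [mconj] using HH_conj hΩ hU hr (-I) I p q hw
  have hcB : ∀ w ∈ Ω, mconj (HH U (-I) (-I) w) = HH U I I w := by
    intro w hw; ext p q
    simpa [mconj] using HH_conj hΩ hU hr (-I) (-I) p q hw
  have hYT : ∀ w ∈ Ω, HH U I (-I) w = (HH U (-I) I w)ᵀ := by
    intro w hw; ext i j; exact gw_comm hΩ hU _ _ _ _ hw
  have h0Y : ∀ w ∈ Ω, (HH U I (-I) w).det ≠ 0 := by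
    intro w hw; rw [hYT w hw, Matrix.det_transpose]; exact h0 w hw
  have hA := MSm.HH hΩ hU (-I) I
  have hX := MSm.HH hΩ hU (-I) (-I)
  have hY := MSm.HH hΩ hU I (-I)
  have hZ := MSm.HH hΩ hU I I
  have hM : ∀ i j, mwdz (mwdzbar (fun w => HH U (-I) I w -
      HH U (-I) (-I) w * (mconj (HH U (-I) I w))⁻¹ * mconj (HH U (-I) (-I) w)) j) i z =
      mD (-I) i (mD I j (HH U (-I) I)) z - mD (-I) i (mD I j
        (fun w => HH U (-I) (-I) w * (HH U I (-I) w)⁻¹ * HH U I I w)) z := by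
    intro i j
    have hXYZ := (hX.mul (hY.inv h0Y)).mul hZ
    rw [mwdz_eq, mwdzbar_eq, ← mD_sub hΩ (hA.mD hΩ I j) (hXYZ.mD hΩ I j) _ _ hz]
    refine mD_congr hΩ (fun w hw => ?_) _ _ hz
    rw [← mD_sub hΩ hA hXYZ _ _ hw]
    refine mD_congr hΩ (fun x hx => ?_) _ _ hw
    rw [hcA x hx, hcB x hx]
  have hmY : ∀ i, mwdz (fun w => mconj (HH U (-I) I w)) i z = mD (-I) i (HH U I (-I)) z := by
    intro i; rw [mwdz_eq]; exact mD_congr hΩ hcA _ _ hz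
  have hYs : (HH U I (-I) z)ᴴ = HH U I (-I) z := by
    simpa using HH_star hΩ hU hr I (-I) hz
  have hstar : ∀ j, (mD (-I) j (HH U (-I) (-I)) z - HH U (-I) (-I) z * (HH U I (-I) z)⁻¹ *
      mD (-I) j (HH U I (-I)) z)ᴴ = mD I j (HH U I I) z -
        mD I j (HH U I (-I)) z * (HH U I (-I) z)⁻¹ * HH U I I z := by
    intro j
    rw [Matrix.conjTranspose_sub, Matrix.conjTranspose_mul, Matrix.conjTranspose_mul,
      Matrix.conjTranspose_nonsing_inv, hYs, mD_HH_star hΩ hU hr _ _ _ j hz,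
      mD_HH_star hΩ hU hr _ _ _ j hz, HH_star hΩ hU hr _ _ hz]
    simp [Matrix.mul_assoc]
  have hid : (∑ i, ∑ j, uInv u z i j •
          mwdz (mwdzbar
            (fun w => HH U (-I) I w -
      HH U (-I) (-I) w * (mconj (HH U (-I) I w))⁻¹ * mconj (HH U (-I) (-I) w)) j) i z)
        - ((n : ℂ) + 1) •
            (HH U (-I) I z - HH U (-I) (-I) z * (mconj (HH U (-I) I z))⁻¹ *
              mconj (HH U (-I) (-I) z))
      = -∑ i, ∑ j, uInv u z i j •
          ((mwdz (HH U (-I) (-I)) i z -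
              HH U (-I) (-I) z * (mconj (HH U (-I) I z))⁻¹ *
                mwdz (fun w => mconj (HH U (-I) I w)) i z) *
            (mconj (HH U (-I) I z))⁻¹ *
            (mwdz (HH U (-I) (-I)) j z -
              HH U (-I) (-I) z * (mconj (HH U (-I) I z))⁻¹ *
                mwdz (fun w => mconj (HH U (-I) I w)) j z)ᴴ) := by
    simp only [hM, hmY, hcA z hz, hcB z hz, mwdz_eq, hstar,
      second_deriv hΩ hX hY hZ h0Y _ _ _ _ hz]
    rw [sum_shape]
    have hg : ∀ i j, uInv u z i j = (HH U (-I) I z)⁻¹ j i := by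
      intro i j; rw [uInv, hessA_eq, hUU]
    simp only [hg]
    rw [L_HH hΩ hU h0 hKE' (-I) I hz, L_HH hΩ hU h0 hKE' (-I) (-I) hz,
      L_HH hΩ hU h0 hKE' I (-I) hz, L_HH hΩ hU h0 hKE' I I hz,
      C_TT hΩ hU (-I) I hz, C_TT hΩ hU (-I) (-I) hz, C_TT hΩ hU I (-I) hz, C_TT hΩ hU I I hz]
    generalize TT U (-I) I z = T1
    generalize TT U (-I) (-I) z = T2
    generalize TT U I (-I) z = T3
    generalize TT U I I z = T4
    have hc : HH U (-I) (-I) z * (HH U I (-I) z)⁻¹ * HH U I (-I) z *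
        ((HH U I (-I) z)⁻¹ * HH U I I z) =
        HH U (-I) (-I) z * (HH U I (-I) z)⁻¹ * HH U I I z := by
      rw [Matrix.nonsing_inv_mul_cancel_right _ _ (isUnit_iff_ne_zero.2 (h0Y z hz)),
        Matrix.mul_assoc]
    simp only [add_mul, mul_add, smul_mul_assoc, mul_smul_comm, smul_sub, hc, ← mul_assoc]
    simp only [← mul_assoc] at hc
    simp only [hc]
    abel
  refine ⟨hid, ?_⟩
  rw [hid, neg_neg]
  have hg : ∀ i j, uInv u z i j = (HH U (-I) I z)⁻¹ j i := by
    intro i j; rw [uInv, hessA_eq, hUU]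
  simp only [hg]
  refine psd_sum (hpsh z hz).posSemidef.inv ?_ _
  rw [hcA z hz, hYT z hz]
  exact (hpsh z hz).posSemidef.transpose.inv

end
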